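/- Let μ be a measure on ℝ with all moments finite and infinite support, satisfying: (1) μ is determinate, (2) supp(μ) ⊆ [0,∞), (3) 0 ∈ supp(μ), (4) μ({0}) = 0. Fix n ∈ ℕ₀ and consider the Hilbert space H = L²(μ) ⊕ ℂ^{n+1} with inner product ⟨(f,β),(g,γ)⟩ = ∫ f(x) conj(g(x)) dμ(x) + Σ_{j=0}^n β_j conj(γ_j). Then the set of vectors {(p, (p(0), p'(0), …, p^{(n)}(0))) : p a complex polynomial} is dense in H, where p^{(j)} denotes the j-th derivative of p. -/

import Mathlib

open MeasureTheory Polynomial Filter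

noncomputable section

/-- A measure on `ℝ` has all moments finite. -/
def HasAllMoments (μ : Measure ℝ) : Prop :=
  ∀ n : ℕ, Integrable (fun x : ℝ => |x| ^ n) μ

/-- The (topological) support of a measure on `ℝ`: points all of whose
neighborhoods have positive measure. -/
def mSupp (μ : Measure ℝ) : Set ℝ :=
  {x : ℝ | ∀ U ∈ nhds x, μ U ≠ 0}

/-- A measure with all moments finite is determinate if it is the unique measure
with all moments finite having its moment sequence. -/
def IsDeterminate (μ : Measure ℝ) : Prop :=
  ∀ ν : Measure ℝ, HasAllMoments ν →
    (∀ n : ℕ, ∫ x, x ^ n ∂ν = ∫ x, x ^ n ∂μ) → ν = μ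

/-- The complex polynomial functions are dense in `L²(ν)`. -/
def PolyDense (ν : Measure ℝ) : Prop :=
  Dense {f : Lp ℂ 2 ν | ∃ p : Polynomial ℂ, ⇑f =ᵐ[ν] fun x : ℝ => p.eval (x : ℂ)}

/-!
Suppose `|p(-1)| ≤ K ‖p‖` in `L²(μ)` for all polynomials `p`. Every nonnegative polynomial on `ℝ` is
the squared modulus of a complex one, so for `ρ = K⁻²` the functional `p ↦ ∫ p dμ - ρ p(-1)` is
positive. By the Riesz extension and Riesz–Markov theorems it is integration against some `σ`, and
`σ + ρ δ₋₁` has the moments of `μ` but an atom at `-1`, contradicting determinacy. So evaluation at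
`-1` is unbounded.

This unboundedness persists for the norms `p ↦ ‖xᵐ p‖`, by induction on `m`. Zeros of orthogonal
polynomials lie in `[0, ∞)`, so if evaluation at `-1` is bounded for `‖xᵐ⁺¹ p‖` then so is
evaluation at each point of the unit disc, with one constant. If evaluation at `0` were unbounded
for `‖xᵐ p‖`, there would be polynomials `1 + x q` with `‖xᵐ (1 + x q)‖` arbitrarily small; their
modulus is at least `1/2` on a fixed interval `(0, δ]`, which has positive measure because
`0 ∈ supp μ`. So evaluation at `0`, and with it evaluation at `-1`, is bounded for `‖xᵐ p‖`.

Unboundedness at `-1` means that `f ⟂ xᵐ ℂ[x]` implies `f / (1 + x) ⟂ xᵐ ℂ[x]`. Iterating this, the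
Weierstrass theorem in the variable `(1 + x)⁻¹` gives `f = 0`, so `xᵐ ℂ[x]` is dense in `L²(μ)`. For
`m = n + 1` it is contained in the kernel of the surjective map taking `p` to its derivatives at
`0`, and density of the pairs follows.
-/

open scoped ComplexOrder CompactlySupported

section SquaredModulus

variable {p : ℝ[X]}

theorem sq_X_sub_C_dvd_of_nonneg_of_isRoot (hp : ∀ x, 0 ≤ p.eval x) {a : ℝ} (ha : p.IsRoot a) :
    (X - C a) ^ 2 ∣ p := by
  rcases eq_or_ne p 0 with rfl | hp0
  · exact dvd_zero _
  have hmin : IsLocalMin (fun x => p.eval x) a :=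
    Eventually.of_forall fun x => ha.eq_zero.le.trans (hp x)
  have hderiv : p.derivative.IsRoot a := by
    rw [IsRoot, ← p.deriv]
    exact hmin.deriv_eq_zero
  rw [← le_rootMultiplicity_iff hp0]
  exact (one_lt_rootMultiplicity_iff_isRoot hp0).2 ⟨ha, hderiv⟩

theorem quadratic_dvd_of_nonneg_of_aeval_eq_zero (hp : ∀ x, 0 ≤ p.eval x) {w : ℂ}
    (hw : aeval w p = 0) : X ^ 2 - C (2 * w.re) * X + C (‖w‖ ^ 2) ∣ p := by
  by_cases him : w.im = 0
  · lift w to ℝ using him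
    have hroot : p.IsRoot w := by
      rw [← Complex.coe_algebraMap, aeval_algebraMap_apply, Complex.coe_algebraMap] at hw
      exact_mod_cast hw
    convert sq_X_sub_C_dvd_of_nonneg_of_isRoot hp hroot using 1
    simp only [Complex.ofReal_re, Complex.norm_real, Real.norm_eq_abs, sq_abs, C_mul, C_pow,
      C_ofNat]
    ring
  · exact p.quadratic_dvd_of_aeval_eq_zero_im_ne_zero hw him

theorem eval_quadratic_eq_norm_sub_sq (w : ℂ) (x : ℝ) :
    (X ^ 2 - C (2 * w.re) * X + C (‖w‖ ^ 2)).eval x = ‖(x : ℂ) - w‖ ^ 2 := by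
  simp only [eval_add, eval_sub, eval_mul, eval_pow, eval_X, eval_C, Complex.sq_norm,
    Complex.normSq_apply, Complex.sub_re, Complex.sub_im, Complex.ofReal_re, Complex.ofReal_im]
  ring

theorem exists_eval_eq_norm_sub_sq_mul (hp : ∀ x, 0 ≤ p.eval x) (hdeg : p.natDegree ≠ 0) :
    ∃ (w : ℂ) (r : ℝ[X]), r.natDegree < p.natDegree ∧
      ∀ x : ℝ, p.eval x = ‖(x : ℂ) - w‖ ^ 2 * r.eval x := by
  obtain ⟨w, hw⟩ := IsAlgClosed.exists_aeval_eq_zero ℂ p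
    fun h => hdeg (natDegree_eq_of_degree_eq_some h)
  obtain ⟨r, rfl⟩ := quadratic_dvd_of_nonneg_of_aeval_eq_zero hp hw
  have hquad : (X ^ 2 - C (2 * w.re) * X + C (‖w‖ ^ 2)).natDegree = 2 := by compute_degree!
  refine ⟨w, r, ?_, fun x => by rw [eval_mul, eval_quadratic_eq_norm_sub_sq]⟩
  rw [natDegree_mul (ne_zero_of_natDegree_gt (hquad ▸ two_pos)) (by rintro rfl; simp at hdeg),
    hquad]
  omega

theorem nonneg_of_nonneg_norm_sub_sq_mul {w : ℂ} {f : ℝ → ℝ} (hf : Continuous f)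
    (h : ∀ x : ℝ, 0 ≤ ‖(x : ℂ) - w‖ ^ 2 * f x) (x : ℝ) : 0 ≤ f x := by
  have hclosed : IsClosed {x | 0 ≤ f x} := isClosed_le continuous_const hf
  refine hclosed.closure_subset_iff.2 (fun y hy => ?_) (dense_compl_singleton w.re x)
  have hne : (y : ℂ) - w ≠ 0 := fun h0 => hy (by simpa using congrArg Complex.re (sub_eq_zero.1 h0))
  exact nonneg_of_mul_nonneg_right (h y) (by positivity)

theorem exists_eval_eq_norm_sq_of_nonneg (hp : ∀ x, 0 ≤ p.eval x) :
    ∃ g : ℂ[X], ∀ x : ℝ, p.eval x = ‖g.eval (x : ℂ)‖ ^ 2 := by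
  induction hN : p.natDegree using Nat.strong_induction_on generalizing p with
  | _ N ih =>
    by_cases hdeg : p.natDegree = 0
    · obtain ⟨c, rfl⟩ := natDegree_eq_zero.1 hdeg
      have hc : 0 ≤ c := by simpa using hp 0
      exact ⟨C (√c : ℂ), fun x => by simp [Real.sq_sqrt hc]⟩
    · obtain ⟨w, r, hr, hpr⟩ := exists_eval_eq_norm_sub_sq_mul hp hdeg
      obtain ⟨g, hg⟩ := ih _ (hN ▸ hr)
        (nonneg_of_nonneg_norm_sub_sq_mul r.continuous fun x => hpr x ▸ hp x) rfl
      exact ⟨(X - C w) * g, fun x => by simp [hpr, hg, mul_pow]⟩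

end SquaredModulus

namespace HasAllMoments

variable {μ : Measure ℝ} (hμ : HasAllMoments μ)
include hμ

theorem integrable_pow (n : ℕ) : Integrable (fun x => x ^ n) μ :=
  (hμ n).mono' (by fun_prop) (.of_forall fun x => by simp)

theorem integrable_eval (p : ℝ[X]) : Integrable (fun x => p.eval x) μ := by
  simp only [eval_eq_sum_range]
  exact integrable_finsetSum _ fun n _ => (hμ.integrable_pow n).const_mul _

end HasAllMoments

/-- The space of functions on `ℝ` dominated by a polynomial. It contains the polynomials as a
cofinal subspace and also the compactly supported continuous functions, so that it links positive
functionals on polynomials to measures. -/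
def polyDominated : Submodule ℝ (ℝ → ℝ) where
  carrier := {f | ∃ p : ℝ[X], ∀ x, |f x| ≤ p.eval x}
  add_mem' := by
    rintro f g ⟨p, hp⟩ ⟨q, hq⟩
    exact ⟨p + q, fun x => (abs_add_le _ _).trans (by simpa using add_le_add (hp x) (hq x))⟩
  zero_mem' := ⟨0, by simp⟩
  smul_mem' := by
    rintro c f ⟨p, hp⟩
    refine ⟨C |c| * p, fun x => ?_⟩
    simpa [abs_mul] using mul_le_mul_of_nonneg_left (hp x) (abs_nonneg c)

namespace polyDominated

theorem eval_mem (p : ℝ[X]) : (fun x => p.eval x) ∈ polyDominated := by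
  refine ⟨1 + p ^ 2, fun x => ?_⟩
  simp only [eval_add, eval_one, eval_pow, ← sq_abs (p.eval x)]
  nlinarith [sq_nonneg (|p.eval x| - 1)]

theorem coe_compactlySupported_mem (φ : C_c(ℝ, ℝ)) : ⇑φ ∈ polyDominated := by
  obtain ⟨B, hB⟩ := φ.hasCompactSupport.exists_bound_of_continuous φ.continuous
  exact ⟨C B, fun x => by simpa using hB x⟩

/-- The inclusion of the polynomials into the polynomially dominated functions. -/
def ofPolynomial : ℝ[X] →ₗ[ℝ] polyDominated :=
  (LinearMap.pi fun x => leval x).codRestrict polyDominated eval_mem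

/-- The inclusion of `C_c(ℝ, ℝ)` into the polynomially dominated functions. -/
def ofCompactlySupported : C_c(ℝ, ℝ) →ₗ[ℝ] polyDominated where
  toFun φ := ⟨φ, coe_compactlySupported_mem φ⟩
  map_add' _ _ := rfl
  map_smul' _ _ := rfl

theorem ofPolynomial_injective : Function.Injective ofPolynomial := fun _ _ h =>
  Polynomial.funext fun x => congrFun (congrArg Subtype.val h) x

/-- The functional `L` regarded as a partially defined functional on `polyDominated`. -/
def partialFunctional (L : ℝ[X] →ₗ[ℝ] ℝ) : polyDominated →ₗ.[ℝ] ℝ :=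
  ⟨ofPolynomial.range,
    L ∘ₗ (LinearEquiv.ofInjective ofPolynomial ofPolynomial_injective).symm.toLinearMap⟩

theorem partialFunctional_apply (L : ℝ[X] →ₗ[ℝ] ℝ) (p : ℝ[X]) :
    partialFunctional L ⟨ofPolynomial p, p, rfl⟩ = L p :=
  congrArg L <| (LinearEquiv.ofInjective ofPolynomial ofPolynomial_injective).symm_apply_apply p

theorem exists_monotone_extension (L : ℝ[X] →ₗ[ℝ] ℝ)
    (hL : ∀ p : ℝ[X], (∀ x, 0 ≤ p.eval x) → 0 ≤ L p) :
    ∃ Λ : polyDominated →ₗ[ℝ] ℝ, Monotone Λ ∧ ∀ p, Λ (ofPolynomial p) = L p := by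
  let nonnegCone : PointedCone ℝ polyDominated :=
    (PointedCone.positive ℝ (ℝ → ℝ)).comap polyDominated.subtype
  obtain ⟨Λ, hΛL, hΛ⟩ := riesz_extension nonnegCone (partialFunctional L)
    (by
      rintro ⟨_, p, rfl⟩ hp
      rw [partialFunctional_apply]
      exact hL p hp)
    (by
      rintro ⟨f, p, hp⟩
      exact ⟨⟨ofPolynomial p, p, rfl⟩, fun x => neg_le_iff_add_nonneg'.1 (abs_le.1 (hp x)).1⟩)
  refine ⟨Λ, fun f g hfg => ?_, fun p => (hΛL ⟨_, p, rfl⟩).trans (partialFunctional_apply L p)⟩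
  rw [← sub_nonneg, ← map_sub]
  exact hΛ _ fun x => sub_nonneg.2 (hfg x)

end polyDominated

/-- The continuous tent-shaped cutoff: `1` on `[-N, N]` and `0` outside `[-(N + 1), N + 1]`. -/
def cutoff (N : ℕ) (x : ℝ) : ℝ := max 0 (min 1 (N + 1 - |x|))

theorem continuous_cutoff (N : ℕ) : Continuous (cutoff N) := by unfold cutoff; fun_prop

theorem cutoff_nonneg (N : ℕ) (x : ℝ) : 0 ≤ cutoff N x := le_max_left _ _

theorem cutoff_le_one (N : ℕ) (x : ℝ) : cutoff N x ≤ 1 := max_le zero_le_one (min_le_left _ _)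

theorem cutoff_eq_one {N : ℕ} {x : ℝ} (hx : |x| ≤ N) : cutoff N x = 1 := by
  rw [cutoff, min_eq_left (by linarith), max_eq_right zero_le_one]

theorem hasCompactSupport_cutoff (N : ℕ) : HasCompactSupport (cutoff N) := by
  refine .of_support_subset_isCompact (isCompact_Icc (a := -((N : ℝ) + 1)) (b := N + 1))
    fun x hx => abs_le.1 ?_
  contrapose! hx
  rw [Function.notMem_support, cutoff, max_eq_left]
  exact (min_le_right _ _).trans (by linarith)

theorem tendsto_cutoff_atTop (x : ℝ) : Tendsto (cutoff · x) atTop (nhds 1) := by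
  refine tendsto_const_nhds.congr' ?_
  filter_upwards [tendsto_natCast_atTop_atTop.eventually_ge_atTop |x|] with N hN
  exact (cutoff_eq_one hN).symm

/-- The polynomial `p` multiplied by `cutoff N`. -/
def cutoffMul (N : ℕ) (p : ℝ[X]) : C_c(ℝ, ℝ) where
  toFun x := cutoff N x * p.eval x
  continuous_toFun := (continuous_cutoff N).mul p.continuous
  hasCompactSupport' := (hasCompactSupport_cutoff N).mul_right

theorem cutoffMul_apply (N : ℕ) (p : ℝ[X]) (x : ℝ) :
    cutoffMul N p x = cutoff N x * p.eval x := rfl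

theorem abs_cutoffMul_sub_eval_le {N : ℕ} (hN : 0 < N) (p : ℝ[X]) (x : ℝ) :
    |cutoffMul N p x - p.eval x| ≤ (N : ℝ)⁻¹ * (p ^ 2 + X ^ 2).eval x := by
  have hN' : (0 : ℝ) < N := by exact_mod_cast hN
  simp only [cutoffMul_apply, eval_add, eval_pow, eval_X]
  rcases le_or_gt |x| N with hx | hx
  · rw [cutoff_eq_one hx, one_mul, sub_self, abs_zero]
    positivity
  -- Here `1 ≤ |x| / N`, and `|p x| |x| ≤ p x ^ 2 + x ^ 2`.
  calc |cutoff N x * p.eval x - p.eval x| = (1 - cutoff N x) * |p.eval x| := by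
        rw [← sub_one_mul, abs_mul, abs_sub_comm, abs_of_nonneg (sub_nonneg.2 (cutoff_le_one N x))]
    _ ≤ |p.eval x| :=
        mul_le_of_le_one_left (abs_nonneg _) (sub_le_self 1 (cutoff_nonneg N x))
    _ ≤ (N : ℝ)⁻¹ * (|p.eval x| * |x|) := by
        rw [le_inv_mul_iff₀ hN', mul_comm]
        gcongr
    _ ≤ (N : ℝ)⁻¹ * (p.eval x ^ 2 + x ^ 2) := by
        gcongr
        rw [← sq_abs (p.eval x), ← sq_abs x]
        nlinarith [sq_nonneg (|p.eval x| - |x|), sq_nonneg |p.eval x|, sq_nonneg |x|]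

theorem HasAllMoments.tendsto_integral_cutoffMul {σ : Measure ℝ} (hσ : HasAllMoments σ)
    (p : ℝ[X]) :
    Tendsto (fun N => ∫ x, cutoffMul N p x ∂σ) atTop (nhds (∫ x, p.eval x ∂σ)) := by
  refine tendsto_integral_of_dominated_convergence (fun x => ‖p.eval x‖)
    (fun N => (cutoffMul N p).continuous.aestronglyMeasurable) (hσ.integrable_eval p).norm
    (fun N => .of_forall fun x => ?_) (.of_forall fun x => ?_)
  · rw [cutoffMul_apply, norm_mul, Real.norm_of_nonneg (cutoff_nonneg N x)]
    exact mul_le_of_le_one_left (norm_nonneg _) (cutoff_le_one N x)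
  · simpa only [cutoffMul_apply, one_mul] using (tendsto_cutoff_atTop x).mul_const (p.eval x)

section PositiveFunctional

open polyDominated

variable {Λ : polyDominated →ₗ[ℝ] ℝ} (hΛ : Monotone Λ)
include hΛ

theorem exists_measure_integral_compactlySupported_eq :
    ∃ σ : Measure ℝ, IsFiniteMeasureOnCompacts σ ∧
      ∀ φ : C_c(ℝ, ℝ), ∫ x, φ x ∂σ = Λ (ofCompactlySupported φ) := by
  let ΛCc : C_c(ℝ, ℝ) →ₚ[ℝ] ℝ :=
    { Λ ∘ₗ ofCompactlySupported with monotone' := fun _ _ h => hΛ h }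
  exact ⟨RealRMK.rieszMeasure ΛCc, inferInstance, RealRMK.integral_rieszMeasure ΛCc⟩

theorem tendsto_apply_cutoffMul (p : ℝ[X]) :
    Tendsto (fun N => Λ (ofCompactlySupported (cutoffMul N p))) atTop
      (nhds (Λ (ofPolynomial p))) := by
  rw [tendsto_iff_norm_sub_tendsto_zero]
  refine squeeze_zero' (.of_forall fun N => norm_nonneg _) ?_
    (tendsto_const_div_atTop_nhds_zero_nat (Λ (ofPolynomial (p ^ 2 + X ^ 2))))
  filter_upwards [eventually_gt_atTop 0] with N hN
  have hbound := abs_cutoffMul_sub_eval_le hN p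
  rw [← map_sub, Real.norm_eq_abs, div_eq_inv_mul, ← smul_eq_mul, ← map_smul, abs_le, ← map_neg]
  exact ⟨hΛ fun x => (abs_le.1 (hbound x)).1, hΛ fun x => (abs_le.1 (hbound x)).2⟩

variable {σ : Measure ℝ} [IsFiniteMeasureOnCompacts σ]
  (hσ : ∀ φ : C_c(ℝ, ℝ), ∫ x, φ x ∂σ = Λ (ofCompactlySupported φ))
include hσ

theorem setIntegral_Icc_le_of_le_eval {f : ℝ → ℝ} (hf : Continuous f) (hf0 : ∀ x, 0 ≤ f x)
    {p : ℝ[X]} (hfp : ∀ x, f x ≤ p.eval x) (N : ℕ) :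
    ∫ x in Set.Icc (-N : ℝ) N, f x ∂σ ≤ Λ (ofPolynomial p) := by
  have hp0 : ∀ x, 0 ≤ p.eval x := fun x => (hf0 x).trans (hfp x)
  have hint : Integrable (cutoffMul N p) σ :=
    (cutoffMul N p).continuous.integrable_of_hasCompactSupport (cutoffMul N p).hasCompactSupport
  calc ∫ x in Set.Icc (-N : ℝ) N, f x ∂σ
      ≤ ∫ x in Set.Icc (-N : ℝ) N, cutoffMul N p x ∂σ := by
        refine setIntegral_mono_on (hf.continuousOn.integrableOn_compact isCompact_Icc)
          hint.integrableOn measurableSet_Icc fun x hx => ?_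
        rw [cutoffMul_apply, cutoff_eq_one (abs_le.2 hx), one_mul]
        exact hfp x
    _ ≤ ∫ x, cutoffMul N p x ∂σ :=
        setIntegral_le_integral hint (.of_forall fun x => mul_nonneg (cutoff_nonneg N x) (hp0 x))
    _ = Λ (ofCompactlySupported (cutoffMul N p)) := hσ _
    _ ≤ Λ (ofPolynomial p) := hΛ fun x => mul_le_of_le_one_left (hp0 x) (cutoff_le_one N x)

theorem hasAllMoments_of_integral_compactlySupported_eq : HasAllMoments σ := by
  intro n
  have hcont : Continuous fun x : ℝ => |x| ^ n := by fun_prop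
  have hcover : AECover σ atTop fun N : ℕ => Set.Icc (-N : ℝ) N :=
    aecover_Icc (tendsto_neg_atTop_atBot.comp tendsto_natCast_atTop_atTop)
      tendsto_natCast_atTop_atTop
  have hle (x : ℝ) : ‖|x| ^ n‖ ≤ (1 + (X ^ n) ^ 2 : ℝ[X]).eval x := by
    simp only [eval_add, eval_one, eval_pow, eval_X, norm_pow, Real.norm_eq_abs, abs_abs]
    rw [← sq_abs (x ^ n), abs_pow]
    nlinarith [sq_nonneg (|x| ^ n - 1)]
  exact hcover.integrable_of_integral_norm_bounded _
    (fun N => hcont.continuousOn.integrableOn_compact isCompact_Icc)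
    (.of_forall fun N =>
      setIntegral_Icc_le_of_le_eval hΛ hσ hcont.norm (fun x => norm_nonneg _) hle N)

end PositiveFunctional

theorem exists_measure_integral_eval_eq (L : ℝ[X] →ₗ[ℝ] ℝ)
    (hL : ∀ p : ℝ[X], (∀ x, 0 ≤ p.eval x) → 0 ≤ L p) :
    ∃ σ : Measure ℝ, HasAllMoments σ ∧ ∀ p : ℝ[X], ∫ x, p.eval x ∂σ = L p := by
  obtain ⟨Λ, hΛ, hΛL⟩ := polyDominated.exists_monotone_extension L hL
  obtain ⟨σ, _, hσ⟩ := exists_measure_integral_compactlySupported_eq hΛ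
  have hmom := hasAllMoments_of_integral_compactlySupported_eq hΛ hσ
  refine ⟨σ, hmom, fun p => ?_⟩
  have hlim := tendsto_apply_cutoffMul hΛ p
  simp only [← hσ, hΛL] at hlim
  exact tendsto_nhds_unique (hmom.tendsto_integral_cutoffMul p) hlim

/-- Evaluation at `z` is bounded on polynomials, with respect to the norm that `Φ` pulls back
from `E`. -/
def BoundedEvalAt {E : Type*} [SeminormedAddCommGroup E] [Module ℂ E] (Φ : ℂ[X] →ₗ[ℂ] E)
    (z : ℂ) : Prop :=
  ∃ K : ℝ, ∀ p : ℂ[X], ‖p.eval z‖ ≤ K * ‖Φ p‖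

section BoundedEvalAt

variable {E : Type*} [SeminormedAddCommGroup E] [NormedSpace ℂ E] {Φ : ℂ[X] →ₗ[ℂ] E} {z : ℂ}

theorem BoundedEvalAt.exists_pos (h : BoundedEvalAt Φ z) :
    ∃ K : ℝ, 0 < K ∧ ∀ p : ℂ[X], ‖p.eval z‖ ≤ K * ‖Φ p‖ := by
  obtain ⟨K, hK⟩ := h
  have h1 : 0 < K * ‖Φ 1‖ := one_pos.trans_le (by simpa using hK 1)
  exact ⟨K, pos_of_mul_pos_left h1 (norm_nonneg _), hK⟩

theorem boundedEvalAt_of_le_norm {m : ℝ} (hm : 0 < m)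
    (h : ∀ p : ℂ[X], p.eval z = 1 → m ≤ ‖Φ p‖) : BoundedEvalAt Φ z := by
  refine ⟨m⁻¹, fun p => ?_⟩
  rcases eq_or_ne (p.eval z) 0 with hp | hp
  · rw [hp, norm_zero]
    positivity
  have hnormalized := h ((p.eval z)⁻¹ • p) (by simp [hp])
  rw [map_smul, norm_smul, norm_inv, le_inv_mul_iff₀ (norm_pos_iff.2 hp)] at hnormalized
  rwa [le_inv_mul_iff₀ hm, mul_comm]

theorem norm_map_X_mul_divX_le (p : ℂ[X]) :
    ‖Φ (X * p.divX)‖ ≤ ‖Φ p‖ + ‖p.eval 0‖ * ‖Φ 1‖ := by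
  have hΦ : Φ (X * p.divX) = Φ p - p.eval 0 • Φ 1 := by
    rw [← map_smul, ← map_sub, smul_eq_C_mul, mul_one, ← coeff_zero_eq_eval_zero,
      eq_sub_of_add_eq (X_mul_divX_add p)]
  rw [hΦ, ← norm_smul]
  exact norm_sub_le _ _

theorem BoundedEvalAt.of_comp_mulLeft_X (h0 : BoundedEvalAt Φ 0)
    (hz : BoundedEvalAt (Φ ∘ₗ LinearMap.mulLeft ℂ X) z) : BoundedEvalAt Φ z := by
  obtain ⟨K₀, -, h0⟩ := h0.exists_pos
  obtain ⟨K, hK, hz⟩ := hz.exists_pos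
  refine ⟨‖z‖ * (K * (1 + K₀ * ‖Φ 1‖)) + K₀, fun p => ?_⟩
  calc ‖p.eval z‖ = ‖z * p.divX.eval z + p.eval 0‖ := by
        conv_lhs => rw [← X_mul_divX_add p]
        simp [coeff_zero_eq_eval_zero]
    _ ≤ ‖z‖ * ‖p.divX.eval z‖ + ‖p.eval 0‖ := (norm_add_le _ _).trans_eq (by rw [norm_mul])
    _ ≤ ‖z‖ * (K * (‖Φ p‖ + K₀ * ‖Φ p‖ * ‖Φ 1‖)) + K₀ * ‖Φ p‖ := by
        gcongr
        · refine (hz p.divX).trans ?_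
          gcongr
          refine (norm_map_X_mul_divX_le p).trans ?_
          gcongr
          exact h0 p
        · exact h0 p
    _ = _ := by ring

end BoundedEvalAt

section OrthogonalPolynomials

variable {E : Type*} [NormedAddCommGroup E] [InnerProductSpace ℂ E] {Φ : ℂ[X] →ₗ[ℂ] E}

theorem inner_eq_zero_of_not_boundedEvalAt {z : ℂ} (hunb : ¬ BoundedEvalAt Φ z) {f : E}
    (hf : ∀ r, inner ℂ (Φ ((X - C z) * r)) f = 0) (q : ℂ[X]) : inner ℂ (Φ q) f = 0 := by
  by_contra hq
  refine hunb ⟨‖q.eval z‖ * ‖f‖ / ‖inner ℂ (Φ q) f‖, fun p => ?_⟩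
  have hroot : (p.eval z • q - q.eval z • p).IsRoot z := by
    simp [IsRoot, mul_comm]
  obtain ⟨r, hr⟩ := dvd_iff_isRoot.2 hroot
  have hpq : ‖p.eval z‖ * ‖inner ℂ (Φ q) f‖ = ‖q.eval z‖ * ‖inner ℂ (Φ p) f‖ := by
    have h := hf r
    rw [← hr, map_sub, map_smul, map_smul, inner_sub_left, inner_smul_left, inner_smul_left,
      sub_eq_zero] at h
    simpa using congrArg norm h
  rw [div_mul_eq_mul_div, le_div_iff₀ (norm_pos_iff.2 hq), hpq, mul_assoc, mul_comm ‖f‖]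
  gcongr
  exact norm_inner_le_norm _ _

theorem exists_monic_orthogonal (Φ : ℂ[X] →ₗ[ℂ] E) (N : ℕ) :
    ∃ P : ℂ[X], P.Monic ∧ P.degree = N ∧ ∀ q : ℂ[X], q.degree < N → inner ℂ (Φ q) (Φ P) = 0 := by
  have : FiniteDimensional ℂ (degreeLT ℂ N) :=
    Module.Finite.equiv (degreeLTEquiv ℂ N).symm
  let W : Submodule ℂ E := (degreeLT ℂ N).map Φ
  obtain ⟨r, hr, hrW⟩ : W.starProjection (Φ (X ^ N)) ∈ W := W.starProjection_apply_mem _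
  have hr : r.degree < N := mem_degreeLT.1 hr
  refine ⟨X ^ N - r, monic_X_pow_sub hr, ?_, fun q hq => ?_⟩
  · rw [degree_sub_eq_left_of_degree_lt (by rwa [degree_X_pow]), degree_X_pow]
  · rw [map_sub, hrW]
    exact W.sub_starProjection_mem_orthogonal _ _ ⟨q, mem_degreeLT.2 hq, rfl⟩

theorem nonneg_of_mem_roots_of_orthogonal (hinj : Function.Injective Φ)
    (hpos : ∀ p, 0 ≤ inner ℂ (Φ p) (Φ (X * p))) {P : ℂ[X]}
    (hP : ∀ q : ℂ[X], q.degree < P.degree → inner ℂ (Φ q) (Φ P) = 0) {w : ℂ}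
    (hw : w ∈ P.roots) : 0 ≤ w := by
  obtain ⟨s, hs⟩ := dvd_iff_isRoot.2 (isRoot_of_mem_roots hw)
  have hs0 : s ≠ 0 := by
    rintro rfl
    simp [hs] at hw
  have hdeg : s.degree < P.degree := by
    rw [hs, degree_mul, degree_X_sub_C, degree_eq_natDegree hs0]
    norm_cast
    omega
  have hΦs : inner ℂ (Φ s) (Φ s) ≠ 0 :=
    inner_self_ne_zero.2 ((map_ne_zero_iff Φ hinj).2 hs0)
  have hRayleigh : w = inner ℂ (Φ s) (Φ (X * s)) / inner ℂ (Φ s) (Φ s) := by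
    have h := hP s hdeg
    rw [hs, sub_mul, map_sub, inner_sub_right, ← smul_eq_C_mul, map_smul, inner_smul_right,
      sub_eq_zero] at h
    rw [h, mul_div_cancel_right₀ _ hΦs]
  rw [hRayleigh, inner_self_eq_norm_sq_to_K]
  exact div_nonneg (hpos s) (by positivity)

theorem norm_eval_le_norm_eval_neg {P : ℂ[X]} (hP : ∀ w ∈ P.roots, 0 ≤ w) {a : ℝ} {z : ℂ}
    (hz : ‖z‖ ≤ a) : ‖P.eval z‖ ≤ ‖P.eval (-a : ℂ)‖ := by
  have hfactor : ∀ w ∈ P.roots, ‖z - w‖ ≤ ‖(-a : ℂ) - w‖ := by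
    intro w hw
    obtain ⟨t, ht, rfl⟩ := RCLike.nonneg_iff_exists_ofReal.1 (hP w hw)
    calc ‖z - t‖ ≤ a + t :=
          (norm_sub_le _ _).trans (add_le_add hz (Complex.norm_of_nonneg ht).le)
      _ = ‖(-a : ℂ) - t‖ := by
          rw [← neg_add', norm_neg, ← Complex.ofReal_add,
            Complex.norm_of_nonneg (add_nonneg ((norm_nonneg z).trans hz) ht)]
  have hprod (y : ℂ) :
      ‖P.eval y‖ = ‖P.leadingCoeff‖ * (P.roots.map fun w => ‖y - w‖).prod := by
    rw [(IsAlgClosed.splits P).eval_eq_prod_roots, norm_mul, ← normHom_apply (Multiset.prod _),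
      map_multiset_prod, Multiset.map_map]
    rfl
  rw [hprod, hprod]
  gcongr
  exact Multiset.prod_map_le_prod_map₀ _ _ (fun w _ => norm_nonneg _) hfactor

theorem norm_map_add_smul_sq {P u : ℂ[X]} (h : inner ℂ (Φ u) (Φ P) = 0) (c : ℂ) :
    ‖Φ (u + c • P)‖ ^ 2 = ‖Φ u‖ ^ 2 + (‖c‖ * ‖Φ P‖) ^ 2 := by
  have horth : inner ℂ (Φ u) (c • Φ P) = 0 := by rw [inner_smul_right, h, mul_zero]
  rw [map_add, map_smul, ← norm_smul]
  simpa only [← sq] using norm_add_sq_eq_norm_sq_add_norm_sq_of_inner_eq_zero _ _ horth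

theorem degree_sub_coeff_smul_lt {P p : ℂ[X]} {N : ℕ} (hP : P.Monic) (hPN : P.degree = N)
    (hp : p.degree < (N + 1 : ℕ)) : (p - p.coeff N • P).degree < N := by
  rw [degree_lt_iff_coeff_zero] at hp ⊢
  intro k hk
  have hPcoeff : P.coeff N = 1 := by rw [← natDegree_eq_of_degree_eq_some hPN]; exact hP
  rcases hk.eq_or_lt with rfl | hk
  · simp [hPcoeff]
  · simp [hp k hk, coeff_eq_zero_of_degree_lt (hPN.trans_lt (by exact_mod_cast hk))]

theorem exists_norm_map_le_and_norm_eval_le_re (hinj : Function.Injective Φ)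
    (hpos : ∀ p, 0 ≤ inner ℂ (Φ p) (Φ (X * p))) {a : ℝ} {z : ℂ} (hz : ‖z‖ ≤ a) {N : ℕ} {p : ℂ[X]}
    (hp : p.degree < N) :
    ∃ r : ℂ[X], r.degree < N ∧ ‖Φ r‖ ≤ ‖Φ p‖ ∧ ‖p.eval z‖ ≤ (r.eval (-a : ℂ)).re := by
  induction N generalizing p with
  | zero =>
    obtain rfl : p = 0 := by simpa [Nat.WithBot.lt_zero_iff] using hp
    exact ⟨0, by simp⟩
  | succ N ih =>
    obtain ⟨P, hPmonic, hPN, hPorth⟩ := exists_monic_orthogonal Φ N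
    have hPz : ‖P.eval z‖ ≤ ‖P.eval (-a : ℂ)‖ := norm_eval_le_norm_eval_neg
      (fun w hw => nonneg_of_mem_roots_of_orthogonal hinj hpos (hPN ▸ hPorth) hw) hz
    set c := p.coeff N
    set q := p - c • P
    have hpq : p = q + c • P := (sub_add_cancel _ _).symm
    have hq : q.degree < N := degree_sub_coeff_smul_lt hPmonic hPN hp
    obtain ⟨r, hrN, hrq, hqr⟩ := ih hq
    obtain ⟨u, hu, hPu⟩ := RCLike.exists_norm_eq_mul_self (P.eval (-a : ℂ))
    refine ⟨r + (‖c‖ * u) • P, ?_, ?_, ?_⟩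
    · have hN : (N : WithBot ℕ) < (N + 1 : ℕ) := by exact_mod_cast N.lt_succ_self
      exact (degree_add_le _ _).trans_lt
        (max_lt (hrN.trans hN) ((degree_smul_le _ _).trans_lt (hPN.trans_lt hN)))
    · rw [hpq, ← sq_le_sq₀ (norm_nonneg _) (norm_nonneg _), norm_map_add_smul_sq (hPorth r hrN),
        norm_map_add_smul_sq (hPorth q hq), norm_mul, hu, mul_one, Complex.norm_real, norm_norm]
      gcongr
    · calc ‖p.eval z‖ ≤ ‖q.eval z‖ + ‖c‖ * ‖P.eval z‖ := by
            rw [hpq, eval_add, eval_smul, smul_eq_mul, ← norm_mul]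
            exact norm_add_le _ _
        _ ≤ (r.eval (-a : ℂ)).re + ‖c‖ * ‖P.eval (-a : ℂ)‖ := by gcongr
        _ = ((r + (‖c‖ * u) • P).eval (-a : ℂ)).re := by
            rw [eval_add, eval_smul, smul_eq_mul, mul_assoc, ← hPu, Complex.add_re,
              Complex.re_ofReal_mul]
            rfl

theorem norm_eval_le_of_norm_eval_neg_le (hinj : Function.Injective Φ)
    (hpos : ∀ p, 0 ≤ inner ℂ (Φ p) (Φ (X * p))) {K a : ℝ}
    (hK : ∀ p : ℂ[X], ‖p.eval (-a : ℂ)‖ ≤ K * ‖Φ p‖) (hK0 : 0 ≤ K) {z : ℂ} (hz : ‖z‖ ≤ a)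
    (p : ℂ[X]) : ‖p.eval z‖ ≤ K * ‖Φ p‖ := by
  obtain ⟨r, -, hrp, hpr⟩ := exists_norm_map_le_and_norm_eval_le_re hinj hpos hz
    (degree_le_natDegree.trans_lt (Nat.cast_lt.2 p.natDegree.lt_succ_self))
  calc ‖p.eval z‖ ≤ (r.eval (-a : ℂ)).re := hpr
    _ ≤ ‖r.eval (-a : ℂ)‖ := Complex.re_le_norm _
    _ ≤ K * ‖Φ r‖ := hK r
    _ ≤ K * ‖Φ p‖ := by gcongr

theorem BoundedEvalAt.zero_of_comp_mulLeft_X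
    (hinj : Function.Injective Φ) (hpos : ∀ p, 0 ≤ inner ℂ (Φ (X * p)) (Φ (X * (X * p))))
    (hlower : ∀ δ > 0, ∃ c > 0, ∀ p : ℂ[X],
      (∀ x : ℝ, x ∈ Set.Ioc 0 δ → 1 / 2 ≤ ‖p.eval (x : ℂ)‖) → c ≤ ‖Φ p‖)
    {a : ℝ} (ha : 0 < a) (h : BoundedEvalAt (Φ ∘ₗ LinearMap.mulLeft ℂ X) (-a : ℂ)) :
    BoundedEvalAt Φ 0 := by
  obtain ⟨K, hK, hKa⟩ := h.exists_pos
  set M := K * (1 + ‖Φ 1‖)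
  have hM : 0 < M := by positivity
  obtain ⟨c, hc, hΦc⟩ := hlower (min a (1 / (2 * M))) (by positivity)
  refine boundedEvalAt_of_le_norm (lt_min one_pos hc) fun p hp => ?_
  rcases le_total 1 ‖Φ p‖ with hp1 | hp1
  · exact (min_le_left _ _).trans hp1
  refine (min_le_right _ _).trans (hΦc p fun x ⟨hx0, hxδ⟩ => ?_)
  have hx : ‖(x : ℂ)‖ = x := Complex.norm_of_nonneg hx0.le
  have hdivX : ‖p.divX.eval (x : ℂ)‖ ≤ M := by
    refine (norm_eval_le_of_norm_eval_neg_le (fun q r h => ?_) hpos hKa hK.le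
      (hx.trans_le (hxδ.trans (min_le_left _ _))) p.divX).trans ?_
    · exact mul_left_cancel₀ X_ne_zero (hinj h)
    · refine mul_le_mul_of_nonneg_left ((norm_map_X_mul_divX_le p).trans ?_) hK.le
      simpa [hp] using hp1
  have heval : p.eval (x : ℂ) = 1 + x * p.divX.eval (x : ℂ) := by
    conv_lhs => rw [← X_mul_divX_add p]
    simp [coeff_zero_eq_eval_zero, hp, add_comm]
  have hsmall : ‖x * p.divX.eval (x : ℂ)‖ ≤ 1 / 2 := by
    calc ‖x * p.divX.eval (x : ℂ)‖ ≤ 1 / (2 * M) * M := by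
          rw [norm_mul, hx]
          gcongr
          exact hxδ.trans (min_le_right _ _)
      _ = 1 / 2 := by field_simp
  calc (1 / 2 : ℝ) ≤ ‖(1 : ℂ)‖ - ‖x * p.divX.eval (x : ℂ)‖ := by rw [norm_one]; linarith
    _ ≤ ‖p.eval (x : ℂ)‖ := heval ▸ norm_sub_le_norm_add _ _

end OrthogonalPolynomials

theorem mSupp_eq_support (μ : Measure ℝ) : mSupp μ = μ.support := by
  ext x
  simp only [mSupp, Set.mem_ofPred_eq, Measure.mem_support_iff_forall, pos_iff_ne_zero]

theorem ae_pos_of_mSupp_subset_Ici {μ : Measure ℝ} (hsupp : mSupp μ ⊆ Set.Ici 0)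
    (hmass : μ {0} = 0) : ∀ᵐ x ∂μ, 0 < x := by
  have hsuppAe : ∀ᵐ x ∂μ, x ∈ mSupp μ := mSupp_eq_support μ ▸ Measure.support_mem_ae
  filter_upwards [hsuppAe, compl_mem_ae_iff.2 hmass] with x hx hx0
  exact lt_of_le_of_ne (hsupp hx) (Ne.symm hx0)

theorem setIntegral_Ioc_pos {μ : Measure ℝ} (hpos : ∀ᵐ x ∂μ, 0 < x) (h0 : 0 ∈ mSupp μ)
    {f : ℝ → ℝ} (hf : Integrable f μ) (hf0 : ∀ x, 0 < x → 0 < f x) {δ : ℝ} (hδ : 0 < δ) :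
    0 < ∫ x in Set.Ioc 0 δ, f x ∂μ := by
  have hnonneg : 0 ≤ᵐ[μ.restrict (Set.Ioc 0 δ)] f :=
    ae_restrict_of_ae (hpos.mono fun x hx => (hf0 x hx).le)
  have hsubset : Set.Ioc 0 δ ⊆ Function.support f := fun x hx => (hf0 x hx.1).ne'
  rw [setIntegral_pos_iff_support_of_nonneg_ae hnonneg hf.integrableOn,
    Set.inter_eq_right.2 hsubset, pos_iff_ne_zero]
  refine fun hnull => h0 (Set.Iic δ) (Iic_mem_nhds hδ) (measure_mono_null_ae ?_ hnull)
  filter_upwards [hpos] with x hx hxδ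
  exact ⟨hx, hxδ⟩

namespace HasAllMoments

variable {μ : Measure ℝ} (hμ : HasAllMoments μ)

include hμ in
theorem memLp_eval (p : ℂ[X]) : MemLp (fun x : ℝ => p.eval (x : ℂ)) 2 μ := by
  have hmonomial (n : ℕ) : MemLp (fun x : ℝ => (x : ℂ) ^ n) 2 μ := by
    rw [memLp_two_iff_integrable_sq_norm (by fun_prop)]
    refine (hμ.integrable_pow (n * 2)).congr (.of_forall fun x => ?_)
    simp [← pow_mul, (even_two.mul_left n).pow_abs]
  simp only [eval_eq_sum_range]
  exact memLp_finsetSum _ fun n _ => (hmonomial n).const_mul _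

include hμ in
theorem integrable_norm_eval_sq (p : ℂ[X]) :
    Integrable (fun x : ℝ => ‖p.eval (x : ℂ)‖ ^ 2) μ :=
  (memLp_two_iff_integrable_sq_norm (hμ.memLp_eval p).1).1 (hμ.memLp_eval p)

/-- The map sending a complex polynomial to its class in `L²(μ)`. -/
def polyL2 : ℂ[X] →ₗ[ℂ] Lp ℂ 2 μ where
  toFun p := (hμ.memLp_eval p).toLp
  map_add' p q := by simp only [eval_add]; exact MemLp.toLp_add _ _
  map_smul' c p := by simp only [eval_smul]; exact (hμ.memLp_eval p).toLp_const_smul c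

theorem coeFn_polyL2 (p : ℂ[X]) : hμ.polyL2 p =ᵐ[μ] fun x : ℝ => p.eval (x : ℂ) :=
  (hμ.memLp_eval p).coeFn_toLp

theorem norm_polyL2_sq (p : ℂ[X]) : ‖hμ.polyL2 p‖ ^ 2 = ∫ x : ℝ, ‖p.eval (x : ℂ)‖ ^ 2 ∂μ := by
  have hinner := inner_self_eq_norm_sq_to_K (𝕜 := ℂ) (hμ.polyL2 p)
  rw [L2.inner_def] at hinner
  apply Complex.ofReal_injective
  rw [Complex.ofReal_pow, ← Complex.coe_algebraMap, ← hinner, Complex.coe_algebraMap,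
    ← integral_complex_ofReal]
  refine integral_congr_ae ?_
  filter_upwards [hμ.coeFn_polyL2 p] with x hx
  simp [hx, inner_self_eq_norm_sq_to_K]

theorem polyL2_injective (hinf : (mSupp μ).Infinite) : Function.Injective hμ.polyL2 := by
  rw [injective_iff_map_eq_zero]
  intro p hp
  have hae : (fun x : ℝ => p.eval (x : ℂ)) =ᵐ[μ] 0 := by
    filter_upwards [hμ.coeFn_polyL2 p, Lp.coeFn_zero ℂ 2 μ] with x hx hx0
    rw [← hx, hp, hx0]
  have hcont : Continuous fun x : ℝ => p.eval (x : ℂ) := by fun_prop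
  refine eq_zero_of_infinite_isRoot p <|
    (hinf.image Complex.ofReal_injective.injOn).mono ?_
  rintro _ ⟨x, hx, rfl⟩
  by_contra hne
  exact hx _ (hcont.isOpen_preimage _ isOpen_ne |>.mem_nhds hne) (ae_iff.1 hae)

theorem inner_polyL2_X_mul_nonneg (hpos : ∀ᵐ x ∂μ, 0 < x) (p : ℂ[X]) :
    0 ≤ inner ℂ (hμ.polyL2 p) (hμ.polyL2 (X * p)) := by
  have hinner : inner ℂ (hμ.polyL2 p) (hμ.polyL2 (X * p)) =
      (∫ x : ℝ, x * ‖p.eval (x : ℂ)‖ ^ 2 ∂μ : ℝ) := by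
    rw [L2.inner_def, ← integral_complex_ofReal]
    refine integral_congr_ae ?_
    filter_upwards [hμ.coeFn_polyL2 p, hμ.coeFn_polyL2 (X * p)] with x hp hXp
    rw [hp, hXp, eval_mul, eval_X, ← smul_eq_mul, inner_smul_right, inner_self_eq_norm_sq_to_K]
    simp
  rw [hinner, Complex.zero_le_real]
  exact integral_nonneg_of_ae (hpos.mono fun x hx => by positivity)

theorem exists_pos_le_norm_polyL2_X_pow_mul (hpos : ∀ᵐ x ∂μ, 0 < x) (h0 : 0 ∈ mSupp μ) (m : ℕ)
    {δ : ℝ} (hδ : 0 < δ) :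
    ∃ c > 0, ∀ p : ℂ[X], (∀ x : ℝ, x ∈ Set.Ioc 0 δ → 1 / 2 ≤ ‖p.eval (x : ℂ)‖) →
      c ≤ ‖hμ.polyL2 (X ^ m * p)‖ := by
  have hint : Integrable (fun x : ℝ => (x ^ m * (1 / 2)) ^ 2) μ :=
    (hμ.integrable_eval ((X ^ m * C (1 / 2)) ^ 2)).congr
      (.of_forall fun x => by simp only [eval_pow, eval_mul, eval_X, eval_C])
  refine ⟨√(∫ x in Set.Ioc 0 δ, (x ^ m * (1 / 2)) ^ 2 ∂μ),
    Real.sqrt_pos.2 (setIntegral_Ioc_pos hpos h0 hint (fun x hx => by positivity) hδ),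
    fun p hp => Real.sqrt_le_iff.2 ⟨norm_nonneg _, ?_⟩⟩
  have hpint := hμ.integrable_norm_eval_sq (X ^ m * p)
  calc ∫ x in Set.Ioc 0 δ, (x ^ m * (1 / 2)) ^ 2 ∂μ
      ≤ ∫ x : ℝ in Set.Ioc 0 δ, ‖(X ^ m * p).eval (x : ℂ)‖ ^ 2 ∂μ := by
        refine setIntegral_mono_on hint.integrableOn hpint.integrableOn measurableSet_Ioc
          fun x hx => ?_
        have hx0 : 0 ≤ x := hx.1.le
        simp only [eval_mul, eval_pow, eval_X, norm_mul, norm_pow, Complex.norm_of_nonneg hx0]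
        gcongr
        exact hp x hx
    _ ≤ ∫ x : ℝ, ‖(X ^ m * p).eval (x : ℂ)‖ ^ 2 ∂μ :=
        setIntegral_le_integral hpint (.of_forall fun x => sq_nonneg _)
    _ = ‖hμ.polyL2 (X ^ m * p)‖ ^ 2 := (hμ.norm_polyL2_sq _).symm

/-- The moment functional `p ↦ ∫ p dμ` on real polynomials. -/
def momentFunctional : ℝ[X] →ₗ[ℝ] ℝ where
  toFun p := ∫ x, p.eval x ∂μ
  map_add' p q := by
    simp only [eval_add]
    exact integral_add (hμ.integrable_eval p) (hμ.integrable_eval q)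
  map_smul' c p := by
    simp only [eval_smul]
    exact integral_smul c _

theorem mul_eval_le_momentFunctional {K a : ℝ} (hK0 : 0 < K)
    (hK : ∀ g : ℂ[X], ‖g.eval (a : ℂ)‖ ≤ K * ‖hμ.polyL2 g‖) {p : ℝ[X]} (hp : ∀ x, 0 ≤ p.eval x) :
    (K ^ 2)⁻¹ * p.eval a ≤ hμ.momentFunctional p := by
  obtain ⟨g, hg⟩ := exists_eval_eq_norm_sq_of_nonneg hp
  have hL : hμ.momentFunctional p = ‖hμ.polyL2 g‖ ^ 2 := by
    rw [norm_polyL2_sq]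
    exact integral_congr_ae (.of_forall hg)
  rw [inv_mul_le_iff₀ (by positivity), hg, hL, ← mul_pow]
  gcongr
  exact hK g

open scoped NNReal in
include hμ in
theorem add_smul_dirac (c : ℝ≥0) (a : ℝ) : HasAllMoments (μ + c • Measure.dirac a) := fun n =>
  (hμ n).add_measure ((integrable_dirac (by finiteness)).smul_measure_nnreal)

open scoped NNReal in
include hμ in
theorem integral_pow_add_smul_dirac (c : ℝ≥0) (a : ℝ) (n : ℕ) :
    ∫ x, x ^ n ∂(μ + c • Measure.dirac a) = ∫ x, x ^ n ∂μ + c * a ^ n := by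
  rw [integral_add_measure (hμ.integrable_pow n)
    (integrable_dirac (by finiteness)).smul_measure_nnreal, integral_smul_nnreal_measure,
    integral_dirac, NNReal.smul_def, smul_eq_mul]

end HasAllMoments

theorem IsDeterminate.not_boundedEvalAt {μ : Measure ℝ} (hdet : IsDeterminate μ)
    (hμ : HasAllMoments μ) {a : ℝ} (ha : μ {a} = 0) : ¬ BoundedEvalAt hμ.polyL2 a := by
  intro hbdd
  obtain ⟨K, hK0, hK⟩ := hbdd.exists_pos
  lift (K ^ 2)⁻¹ to NNReal using by positivity with ρ hρ
  obtain ⟨σ, hσ, hσL⟩ := exists_measure_integral_eval_eq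
    (hμ.momentFunctional - (K ^ 2)⁻¹ • leval a)
    fun p hp => sub_nonneg.2 (hμ.mul_eval_le_momentFunctional hK0 hK hp)
  have hσμ : σ + ρ • Measure.dirac a = μ := by
    refine hdet _ (hσ.add_smul_dirac ρ a) fun n => ?_
    have hn : ∫ x, x ^ n ∂σ = ∫ x, x ^ n ∂μ - ρ * a ^ n := by
      simpa [HasAllMoments.momentFunctional, hρ] using hσL (X ^ n)
    rw [hσ.integral_pow_add_smul_dirac, hn, sub_add_cancel]
  have hρ0 : ρ ≠ 0 := by
    rintro rfl
    exact (inv_pos.2 (pow_pos hK0 2)).ne hρ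
  rw [← hσμ] at ha
  simp [hρ0] at ha

theorem HasAllMoments.not_boundedEvalAt_polyL2_comp_mulLeft_X_pow {μ : Measure ℝ}
    (hμ : HasAllMoments μ) (hinf : (mSupp μ).Infinite) (hdet : IsDeterminate μ)
    (hpos : ∀ᵐ x ∂μ, 0 < x) (h0 : 0 ∈ mSupp μ) {a : ℝ} (ha : 0 < a) (m : ℕ) :
    ¬ BoundedEvalAt (hμ.polyL2 ∘ₗ LinearMap.mulLeft ℂ (X ^ m)) (-a : ℂ) := by
  induction m with
  | zero =>
    have hmass : μ {-a} = 0 := measure_mono_null (by simp [ha.le]) (ae_iff.1 hpos)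
    simpa using hdet.not_boundedEvalAt hμ hmass
  | succ m ih =>
    rw [pow_succ, LinearMap.mulLeft_mul, ← LinearMap.comp_assoc]
    refine fun hbdd => ih (.of_comp_mulLeft_X (.zero_of_comp_mulLeft_X ?_ (fun p => ?_)
      (fun δ hδ => ?_) ha hbdd) hbdd)
    · have hmul : Function.Injective (LinearMap.mulLeft ℂ (X ^ m : ℂ[X])) :=
        mul_right_injective₀ (pow_ne_zero m X_ne_zero)
      exact (hμ.polyL2_injective hinf).comp hmul
    · simp only [LinearMap.comp_apply, LinearMap.mulLeft_apply, mul_left_comm (X ^ m) X (X * p)]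
      exact hμ.inner_polyL2_X_mul_nonneg hpos _
    · simpa using hμ.exists_pos_le_norm_polyL2_X_pow_mul hpos h0 m hδ

section Weierstrass

variable {F : Type*} [NormedAddCommGroup F] [NormedSpace ℝ F] {ν : Measure ℝ} {g : ℝ → F}
  {a b : ℝ}

theorem integrable_smul_of_ae_mem_Icc (hν : ∀ᵐ x ∂ν, x ∈ Set.Icc a b) (hg : Integrable g ν)
    {φ : ℝ → ℝ} (hφ : Continuous φ) : Integrable (fun x => φ x • g x) ν := by
  obtain ⟨B, hB⟩ := isCompact_Icc.exists_bound_of_continuousOn hφ.continuousOn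
  exact hg.bdd_smul B hφ.aestronglyMeasurable (hν.mono hB)

theorem integral_eval_smul_eq_zero (hν : ∀ᵐ x ∂ν, x ∈ Set.Icc a b) (hg : Integrable g ν)
    (h : ∀ n : ℕ, ∫ x, x ^ n • g x ∂ν = 0) (P : ℝ[X]) : ∫ x, P.eval x • g x ∂ν = 0 := by
  have hint (n : ℕ) : Integrable (fun x => P.coeff n • x ^ n • g x) ν :=
    (integrable_smul_of_ae_mem_Icc hν hg (continuous_pow n)).smul _
  simp only [eval_eq_sum_range, Finset.sum_smul, mul_smul]
  rw [integral_finsetSum _ fun n _ => hint n]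
  simp only [integral_smul, h, smul_zero, Finset.sum_const_zero]

theorem integral_continuous_smul_eq_zero (hν : ∀ᵐ x ∂ν, x ∈ Set.Icc a b) (hg : Integrable g ν)
    (h : ∀ n : ℕ, ∫ x, x ^ n • g x ∂ν = 0) {φ : ℝ → ℝ} (hφ : Continuous φ) :
    ∫ x, φ x • g x ∂ν = 0 := by
  have hbound : ∀ ε > 0, ‖∫ x, φ x • g x ∂ν‖ ≤ ε * ∫ x, ‖g x‖ ∂ν := by
    intro ε hε
    obtain ⟨P, hP⟩ := exists_polynomial_near_of_continuousOn a b φ hφ.continuousOn ε hε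
    have hsub : ∫ x, φ x • g x ∂ν = ∫ x, (φ x • g x - P.eval x • g x) ∂ν := by
      rw [integral_sub (integrable_smul_of_ae_mem_Icc hν hg hφ)
        (integrable_smul_of_ae_mem_Icc hν hg P.continuous),
        integral_eval_smul_eq_zero hν hg h, sub_zero]
    rw [hsub, ← integral_const_mul]
    refine norm_integral_le_of_norm_le (hg.norm.const_mul ε) ?_
    filter_upwards [hν] with x hx
    rw [← sub_smul, norm_smul, Real.norm_eq_abs, abs_sub_comm]
    gcongr
    exact (hP x hx).le
  have hlim : Tendsto (fun ε : ℝ => ε * ∫ x, ‖g x‖ ∂ν) (nhdsWithin 0 (Set.Ioi 0)) (nhds 0) :=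
    tendsto_nhdsWithin_of_tendsto_nhds (by simpa using (continuous_mul_const _).tendsto (0 : ℝ))
  exact norm_le_zero_iff.1 (ge_of_tendsto hlim (eventually_mem_nhdsWithin.mono hbound))

theorem ae_eq_zero_of_integral_pow_smul_eq_zero [CompleteSpace F]
    (hν : ∀ᵐ x ∂ν, x ∈ Set.Icc a b) (hg : Integrable g ν)
    (h : ∀ n : ℕ, ∫ x, x ^ n • g x ∂ν = 0) : ∀ᵐ x ∂ν, g x = 0 :=
  ae_eq_zero_of_integral_contDiff_smul_eq_zero hg.locallyIntegrable fun _ hφ _ =>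
    integral_continuous_smul_eq_zero hν hg h hφ.continuous

theorem ae_eq_zero_of_integral_inv_add_pow_smul_eq_zero [CompleteSpace F] (ha : 0 < a)
    (hpos : ∀ᵐ x ∂ν, 0 < x) (hg : Integrable g ν)
    (h : ∀ n : ℕ, ∫ x, (a + x)⁻¹ ^ n • g x ∂ν = 0) : ∀ᵐ x ∂ν, g x = 0 := by
  let e : ℝ ≃ᵐ ℝ := (MeasurableEquiv.addLeft a).trans (MeasurableEquiv.inv ℝ)
  have he (x : ℝ) : e x = (a + x)⁻¹ := rfl
  have hmem : ∀ᵐ y ∂ν.map e, y ∈ Set.Icc 0 a⁻¹ := by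
    rw [e.measurableEmbedding.ae_map_iff]
    filter_upwards [hpos] with x hx
    rw [he]
    exact ⟨by positivity, by gcongr; linarith⟩
  have hzero := ae_eq_zero_of_integral_pow_smul_eq_zero (g := g ∘ e.symm) hmem
    ((integrable_map_equiv e _).2 (by simpa [Function.comp_assoc] using hg))
    fun n => by
      simp only [integral_map_equiv, Function.comp_apply, e.symm_apply_apply]
      exact h n
  rw [e.measurableEmbedding.ae_map_iff] at hzero
  simpa using hzero

end Weierstrass

theorem exists_lp_ae_eq_inv_add_smul {μ : Measure ℝ} {a : ℝ} (ha : 0 < a)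
    (hpos : ∀ᵐ x ∂μ, 0 < x) (f : Lp ℂ 2 μ) :
    ∃ F : Lp ℂ 2 μ, F =ᵐ[μ] fun x => (a + x)⁻¹ • f x := by
  have hmem : MemLp (fun x => (a + x)⁻¹ • f x) 2 μ := by
    have hmeas : Measurable fun x : ℝ => (a + x)⁻¹ := by fun_prop
    refine (Lp.memLp f).of_le_mul (c := a⁻¹) (hmeas.aestronglyMeasurable.smul (Lp.memLp f).1) ?_
    filter_upwards [hpos] with x hx
    rw [norm_smul, Real.norm_of_nonneg (by positivity)]
    gcongr
    linarith
  exact ⟨hmem.toLp, hmem.coeFn_toLp⟩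

namespace HasAllMoments

variable {μ : Measure ℝ} (hμ : HasAllMoments μ) {a : ℝ} {s : ℂ[X]}

theorem inner_polyL2_X_sub_C_mul (ha : 0 < a) (hpos : ∀ᵐ x ∂μ, 0 < x) {f F : Lp ℂ 2 μ}
    (hF : F =ᵐ[μ] fun x => (a + x)⁻¹ • f x) (p : ℂ[X]) :
    inner ℂ (hμ.polyL2 ((X - C (-a : ℂ)) * p)) F = inner ℂ (hμ.polyL2 p) f := by
  rw [L2.inner_def, L2.inner_def]
  refine integral_congr_ae ?_
  filter_upwards [hpos, hF, hμ.coeFn_polyL2 p, hμ.coeFn_polyL2 ((X - C (-a : ℂ)) * p)]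
    with x hx hFx hp hXp
  have hax : (a + x : ℂ) ≠ 0 := by exact_mod_cast (add_pos ha hx).ne'
  rw [hFx, hp, hXp]
  simp only [sub_eq_add_neg, ← C_neg, neg_neg, eval_mul, eval_add, eval_X, eval_C,
    RCLike.inner_apply, Complex.real_smul, map_mul, map_add, Complex.conj_ofReal]
  push_cast
  field_simp
  ring

theorem exists_lp_orthogonal_inv_add_pow_smul (ha : 0 < a) (hpos : ∀ᵐ x ∂μ, 0 < x)
    (hunb : ¬ BoundedEvalAt (hμ.polyL2 ∘ₗ LinearMap.mulLeft ℂ s) (-a : ℂ)) {f : Lp ℂ 2 μ}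
    (hf : ∀ q, inner ℂ (hμ.polyL2 (s * q)) f = 0) (n : ℕ) :
    ∃ F : Lp ℂ 2 μ, F =ᵐ[μ] (fun x => (a + x)⁻¹ ^ n • f x) ∧
      ∀ q, inner ℂ (hμ.polyL2 (s * q)) F = 0 := by
  induction n with
  | zero => exact ⟨f, by simp, hf⟩
  | succ n ih =>
    obtain ⟨G, hG, hGorth⟩ := ih
    obtain ⟨F, hF⟩ := exists_lp_ae_eq_inv_add_smul ha hpos G
    refine ⟨F, ?_, inner_eq_zero_of_not_boundedEvalAt hunb fun r => ?_⟩
    · filter_upwards [hF, hG] with x hFx hGx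
      rw [hFx, hGx, pow_succ', mul_smul]
    · rw [← hGorth r, ← hμ.inner_polyL2_X_sub_C_mul ha hpos hF, LinearMap.comp_apply,
        LinearMap.mulLeft_apply, mul_left_comm]

theorem eq_zero_of_inner_polyL2_mul_eq_zero (ha : 0 < a) (hpos : ∀ᵐ x ∂μ, 0 < x)
    (hs : ∀ᵐ x : ℝ ∂μ, s.eval (x : ℂ) ≠ 0)
    (hunb : ¬ BoundedEvalAt (hμ.polyL2 ∘ₗ LinearMap.mulLeft ℂ s) (-a : ℂ)) {f : Lp ℂ 2 μ}
    (hf : ∀ q, inner ℂ (hμ.polyL2 (s * q)) f = 0) : f = 0 := by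
  have hzero : ∀ᵐ x ∂μ, inner ℂ (hμ.polyL2 s x) (f x) = 0 := by
    refine ae_eq_zero_of_integral_inv_add_pow_smul_eq_zero ha hpos
      (L2.integrable_inner (hμ.polyL2 s) f) fun n => ?_
    obtain ⟨F, hF, hForth⟩ := hμ.exists_lp_orthogonal_inv_add_pow_smul ha hpos hunb hf n
    rw [← hForth 1, mul_one, L2.inner_def]
    refine integral_congr_ae (hF.mono fun x hFx => ?_)
    simp only [hFx, RCLike.inner_apply, Complex.real_smul, mul_assoc]
  refine Lp.ext ?_
  filter_upwards [hzero, hs, hμ.coeFn_polyL2 s, Lp.coeFn_zero ℂ 2 μ] with x hx hsx hpoly h0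
  rw [h0]
  simpa [hpoly, hsx] using hx

theorem denseRange_polyL2_comp_mulLeft (ha : 0 < a) (hpos : ∀ᵐ x ∂μ, 0 < x)
    (hs : ∀ᵐ x : ℝ ∂μ, s.eval (x : ℂ) ≠ 0)
    (hunb : ¬ BoundedEvalAt (hμ.polyL2 ∘ₗ LinearMap.mulLeft ℂ s) (-a : ℂ)) :
    DenseRange (hμ.polyL2 ∘ₗ LinearMap.mulLeft ℂ s) := by
  rw [DenseRange, ← LinearMap.coe_range, Submodule.dense_iff_topologicalClosure_eq_top,
    Submodule.topologicalClosure_eq_top_iff, Submodule.eq_bot_iff]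
  exact fun f hf => hμ.eq_zero_of_inner_polyL2_mul_eq_zero ha hpos hs hunb fun q => hf _ ⟨q, rfl⟩

theorem denseRange_polyL2_comp_mulLeft_X_pow (hinf : (mSupp μ).Infinite) (hdet : IsDeterminate μ)
    (hpos : ∀ᵐ x ∂μ, 0 < x) (h0 : 0 ∈ mSupp μ) (m : ℕ) :
    DenseRange (hμ.polyL2 ∘ₗ LinearMap.mulLeft ℂ (X ^ m)) :=
  hμ.denseRange_polyL2_comp_mulLeft one_pos hpos
    (hpos.mono fun x hx => by simp [hx.ne'])
    (hμ.not_boundedEvalAt_polyL2_comp_mulLeft_X_pow hinf hdet hpos h0 one_pos m)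

end HasAllMoments

/-- The jet of a polynomial at the origin: its derivatives of orders `0, …, k - 1` there. -/
def derivJet (k : ℕ) : ℂ[X] →ₗ[ℂ] EuclideanSpace ℂ (Fin k) where
  toFun p := WithLp.toLp 2 fun j => (derivative^[j] p).eval 0
  map_add' p q := by ext j; simp [iterate_map_add]
  map_smul' c p := by ext j; simp [iterate_derivative_smul]

theorem derivJet_apply (k : ℕ) (p : ℂ[X]) (j : Fin k) :
    derivJet k p j = (j : ℕ).factorial * p.coeff j := by
  change (derivative^[j] p).eval 0 = _
  rw [← coeff_zero_eq_eval_zero, coeff_iterate_derivative, zero_add, Nat.descFactorial_self,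
    nsmul_eq_mul]

theorem derivJet_X_pow_mul (k : ℕ) (q : ℂ[X]) : derivJet k (X ^ k * q) = 0 := by
  ext j
  rw [derivJet_apply, coeff_X_pow_mul', if_neg j.2.not_ge, mul_zero, PiLp.zero_apply]

theorem derivJet_surjective (k : ℕ) : Function.Surjective (derivJet k) := by
  intro β
  refine ⟨ofFn k fun j => β j / (j : ℕ).factorial, ?_⟩
  ext j
  rw [derivJet_apply, ofFn_coeff_eq_val_of_lt _ j.2,
    mul_div_cancel₀ _ (Nat.cast_ne_zero.2 (Nat.factorial_ne_zero _))]

theorem denseRange_prodMk_of_dense_image_ker {R M V W : Type*} [Ring R] [AddCommGroup M]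
    [AddCommGroup V] [AddCommGroup W] [Module R M] [Module R V] [Module R W] [TopologicalSpace V]
    [ContinuousAdd V] [TopologicalSpace W] {A : M →ₗ[R] V} {D : M →ₗ[R] W}
    (hD : Function.Surjective D) (hA : Dense (A '' D.ker)) :
    DenseRange fun m => (A m, D m) := by
  rintro ⟨v, w⟩
  obtain ⟨m, rfl⟩ := hD w
  have hcont : Continuous fun y : V => (y + A m, D m) := by fun_prop
  have hmaps : Set.MapsTo (fun y : V => (y + A m, D m)) (A '' D.ker)
      (Set.range fun m => (A m, D m)) := by
    rintro _ ⟨u, hu, rfl⟩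
    exact ⟨u + m, by simp [LinearMap.mem_ker.1 hu]⟩
  simpa using map_mem_closure hcont (hA (v - A m)) hmaps

theorem HasAllMoments.denseRange_polyL2_derivJet {μ : Measure ℝ} (hμ : HasAllMoments μ) {k : ℕ}
    (hdense : DenseRange (hμ.polyL2 ∘ₗ LinearMap.mulLeft ℂ (X ^ k))) :
    DenseRange fun p => WithLp.toLp 2 (hμ.polyL2 p, derivJet k p) := by
  have hker : Dense (hμ.polyL2 '' (derivJet k).ker) := by
    refine hdense.mono ?_
    rintro _ ⟨q, rfl⟩
    exact ⟨X ^ k * q, derivJet_X_pow_mul k q, rfl⟩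
  exact (WithLp.homeomorphProd 2 _ _).symm.surjective.denseRange.comp
    (denseRange_prodMk_of_dense_image_ker (derivJet_surjective k) hker)
    (WithLp.homeomorphProd 2 _ _).symm.continuous

theorem stmt8 (μ : Measure ℝ) (hmom : HasAllMoments μ) (hinf : (mSupp μ).Infinite)
    (hdet : IsDeterminate μ) (hsupp : mSupp μ ⊆ Set.Ici (0 : ℝ))
    (h0 : (0 : ℝ) ∈ mSupp μ) (hmass : μ {0} = 0) (n : ℕ) :
    Dense {v : WithLp 2 (Lp ℂ 2 μ × EuclideanSpace ℂ (Fin (n + 1))) |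
      ∃ p : Polynomial ℂ,
        ⇑(WithLp.equiv 2 (Lp ℂ 2 μ × EuclideanSpace ℂ (Fin (n + 1))) v).1
            =ᵐ[μ] (fun x : ℝ => p.eval (x : ℂ)) ∧
        ∀ j : Fin (n + 1),
          (WithLp.equiv 2 (Lp ℂ 2 μ × EuclideanSpace ℂ (Fin (n + 1))) v).2 j
            = (Polynomial.derivative^[(j : ℕ)] p).eval 0} := by
  have hpos : ∀ᵐ x ∂μ, 0 < x := ae_pos_of_mSupp_subset_Ici hsupp hmass
  have hdense : DenseRange (hmom.polyL2 ∘ₗ LinearMap.mulLeft ℂ (X ^ (n + 1))) :=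
    hmom.denseRange_polyL2_comp_mulLeft_X_pow hinf hdet hpos h0 (n + 1)
  refine (hmom.denseRange_polyL2_derivJet hdense).mono ?_
  rintro _ ⟨p, rfl⟩
  exact ⟨p, hmom.coeFn_polyL2 p, fun j => rfl⟩
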